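/- arXiv:1007.0962 — 2 statements merged into one kernel-verified Lean document; each statement's English description precedes it below -/
import Mathlib

section
/- Let ξ < 0 and let a be the maximal solution of the Emden equation ä(s) = ξ/a(s)^{1/3} with initial data a(0) = a₀ < 0 and ȧ(0) = a₁, defined on a maximal interval [0,S) on which a(s) < 0, where a^{1/3} denotes the real (odd) cube root. Then S is finite and lim_{s→S⁻} a(s) = 0. -/
/-!
With `a < 0` the force `ξ / cbrt a` is positive, so `a` is convex and `a'` is increasing.

*Finiteness of `S`* (`not_global`). If the solution were global, then `a' ≤ 0` throughout, since
otherwise `a` would lie above a line of positive slope and become positive. Hence `a' 0 ≤ a' ≤ 0`,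
so `|a|` grows at most linearly; as `|cbrt x| ≤ 1 + |x|`, the force is at least `c / (1 + s)` for
some `c > 0`. Integrating, `a'(s) ≥ a' 0 + c log (1 + s)`, which is eventually positive.

*Limit at `S`*. Since `a' ≥ a' 0` and `a < 0`, the function `s ↦ a s - a' 0 * s` is increasing and
bounded above on `[0, S)`, so `a` has a left limit `L ≤ 0` at `S`. If `L < 0`, the force stays
bounded near `S`, hence `a'` also has a left limit. The force is smooth near `L`, so the
Picard–Lindelöf theorem provides a solution past `S` with these limits as initial values, and
gluing it to `a` (`exists_extension`) contradicts maximality. Hence `L = 0`.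
-/

/-- The real (odd) cube root: the odd function with (cbrt x)³ = x for all real x. -/
noncomputable def cbrt (x : ℝ) : ℝ := Real.sign x * |x| ^ ((1:ℝ)/3)

open Set Filter Topology

lemma cbrt_of_neg {x : ℝ} (hx : x < 0) : cbrt x = -((-x) ^ ((1:ℝ)/3)) := by
  simp [cbrt, Real.sign_of_neg hx, abs_of_neg hx]

lemma force_pos {ξ x : ℝ} (hξ : ξ < 0) (hx : x < 0) : 0 < ξ / cbrt x := by
  rw [cbrt_of_neg hx]
  exact div_pos_of_neg_of_neg hξ (neg_neg_of_pos (Real.rpow_pos_of_pos (by linarith) _))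

/-- A lower bound on the force whose integral still diverges when `x` grows linearly in time. -/
lemma force_lower {ξ x : ℝ} (hξ : ξ < 0) (hx : x < 0) : -ξ / (1 - x) ≤ ξ / cbrt x := by
  have hpos : 0 < (-x) ^ ((1:ℝ)/3) := Real.rpow_pos_of_pos (by linarith) _
  have hle : (-x) ^ ((1:ℝ)/3) ≤ 1 - x :=
    calc (-x) ^ ((1:ℝ)/3) ≤ (1 - x) ^ ((1:ℝ)/3) :=
          Real.rpow_le_rpow (by linarith) (by linarith) (by norm_num)
      _ ≤ (1 - x) ^ (1:ℝ) := Real.rpow_le_rpow_of_exponent_le (by linarith) (by norm_num)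
      _ = 1 - x := Real.rpow_one _
  rw [cbrt_of_neg hx, div_neg, ← neg_div]
  exact div_le_div_of_nonneg_left (by linarith) hpos hle

lemma force_contDiffAt {ξ x : ℝ} (hx : x < 0) : ContDiffAt ℝ 1 (fun y => ξ / cbrt y) x := by
  have h : ContDiffAt ℝ 1 (fun y : ℝ => ξ / -((-y) ^ ((1:ℝ)/3))) x := by
    refine contDiffAt_const.div ?_ ?_
    · exact (contDiffAt_id.neg.rpow_const_of_ne (by simpa using hx.ne)).neg
    · exact neg_ne_zero.mpr (Real.rpow_pos_of_pos (by linarith) _).ne'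
  refine h.congr_of_eventuallyEq ?_
  filter_upwards [Iio_mem_nhds hx] with y hy
  rw [cbrt_of_neg hy]

lemma monotoneOn_of_hasDerivAt {D : Set ℝ} (hD : Convex ℝ D) {f f' : ℝ → ℝ}
    (hf : ∀ s ∈ D, HasDerivAt f (f' s) s) (h : ∀ s ∈ D, 0 ≤ f' s) : MonotoneOn f D :=
  monotoneOn_of_hasDerivWithinAt_nonneg hD
    (fun s hs => (hf s hs).continuousAt.continuousWithinAt)
    (fun s hs => (hf s (interior_subset hs)).hasDerivWithinAt)
    (fun s hs => h s (interior_subset hs))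

/-- A function on `(c, S)` that is bounded above and whose derivative is bounded below has a left
limit at `S`, because subtracting a linear function makes it increasing. -/
lemma exists_left_limit {f f' : ℝ → ℝ} {c S m B : ℝ} (hcS : c < S)
    (hf : ∀ s ∈ Ioo c S, HasDerivAt f (f' s) s)
    (hm : ∀ s ∈ Ioo c S, m ≤ f' s) (hB : ∀ s ∈ Ioo c S, f s ≤ B) :
    ∃ l, Tendsto f (𝓝[<] S) (𝓝 l) := by
  have hmono : MonotoneOn (fun s => f s - m * s) (Ioo c S) :=
    monotoneOn_of_hasDerivAt (convex_Ioo c S) (f' := fun s => f' s - m * 1)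
      (fun s hs => (hf s hs).sub ((hasDerivAt_id s).const_mul m))
      (fun s hs => by have := hm s hs; linarith)
  have hbdd : BddAbove ((fun s => f s - m * s) '' Ioo c S) := by
    refine ⟨B + |m| * (|c| + |S|), ?_⟩
    rintro _ ⟨s, hs, rfl⟩
    have h1 := hB s hs
    have h2 : |s| ≤ |c| + |S| := by
      rcases abs_cases s with h | h <;> rcases abs_cases c with h' | h' <;>
        rcases abs_cases S with h'' | h'' <;> linarith [hs.1, hs.2]
    have h3 : -(m * s) ≤ |m| * |s| := by rw [← abs_mul]; exact neg_le_abs _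
    have h4 := mul_le_mul_of_nonneg_left h2 (abs_nonneg m)
    simp only
    linarith
  have h := hmono.tendsto_nhdsWithin_Ioo_left (nonempty_Ioo.mpr hcS) hbdd
  have hlin : Tendsto (fun s : ℝ => m * s) (𝓝[<] S) (𝓝 (m * S)) :=
    ((continuous_const_mul m).tendsto S).mono_left nhdsWithin_le_nhds
  exact ⟨_, (h.add hlin).congr (fun s => by ring)⟩

/-- Gluing at `S`: differentiability holds there if the left limits of `f` and of its derivative are
the value and the derivative of `g` at `S`. -/
lemma hasDerivAt_glue {f f' g : ℝ → ℝ} {c S g' : ℝ} (hcS : c < S)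
    (hf : ∀ s ∈ Ioo c S, HasDerivAt f (f' s) s)
    (hlim : Tendsto f (𝓝[<] S) (𝓝 (g S))) (hlim' : Tendsto f' (𝓝[<] S) (𝓝 g'))
    (hg : HasDerivAt g g' S) :
    HasDerivAt (fun s => if s < S then f s else g s) g' S := by
  set b := fun s => if s < S then f s else g s with hb
  have hbS : b S = g S := by simp [hb]
  have hbf : ∀ s ∈ Ioo c S, HasDerivAt b (f' s) s := fun s hs =>
    (hf s hs).congr_of_eventuallyEq <| by
      filter_upwards [Iio_mem_nhds hs.2] with y hy
      exact if_pos hy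
  have hmem : Ioo c S ∈ 𝓝[<] S := Ioo_mem_nhdsLT hcS
  have hleft : HasDerivWithinAt b g' (Iic S) S := by
    refine hasDerivWithinAt_Iic_of_tendsto_deriv
      (fun s hs => (hbf s hs).differentiableAt.differentiableWithinAt) ?_ hmem ?_
    · rw [ContinuousWithinAt, nhdsWithin_Ioo_eq_nhdsLT hcS, hbS]
      refine hlim.congr' ?_
      filter_upwards [self_mem_nhdsWithin] with y hy
      exact (if_pos hy).symm
    · refine hlim'.congr' ?_
      filter_upwards [hmem] with y hy
      exact (hbf y hy).deriv.symm
  have hright : HasDerivWithinAt b g' (Ici S) S :=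
    hg.hasDerivWithinAt.congr (fun y hy => if_neg (not_lt.mpr hy)) hbS
  exact (hleft.union hright).hasDerivAt (by rw [Iic_union_Ici]; exact univ_mem)

/-- A solution of `a'' = F a` on `(c, S)` with left limits `a → L < 0` and `a' → V` at `S` extends
past `S` as a negative solution, provided `F` is continuously differentiable at `L`. -/
lemma exists_extension {F a a' : ℝ → ℝ} {c S L V : ℝ} (hcS : c < S) (hL : L < 0)
    (hF : ContDiffAt ℝ 1 F L)
    (ha : ∀ s ∈ Ioo c S, HasDerivAt a (a' s) s)
    (ha' : ∀ s ∈ Ioo c S, HasDerivAt a' (F (a s)) s)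
    (hlim : Tendsto a (𝓝[<] S) (𝓝 L)) (hlim' : Tendsto a' (𝓝[<] S) (𝓝 V)) :
    ∃ (b b' : ℝ → ℝ) (ε : ℝ), 0 < ε ∧ (∀ s < S, b s = a s ∧ b' s = a' s) ∧
      ∀ s ∈ Ico S (S + ε), b s < 0 ∧ HasDerivAt b (b' s) s ∧ HasDerivAt b' (F (b s)) s := by
  -- The equation as a first-order system in position and velocity.
  have hv : ContDiffAt ℝ 1 (fun p : ℝ × ℝ => (p.2, F p.1)) (L, V) :=
    contDiffAt_snd.prodMk (hF.comp (L, V) contDiffAt_fst)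
  obtain ⟨α, hα0, ε, hε, hα⟩ :=
    hv.exists_forall_mem_closedBall_exists_eq_forall_mem_Ioo_hasDerivAt₀ S
  have hx : ∀ t ∈ Ioo (S - ε) (S + ε), HasDerivAt (fun t => (α t).1) (α t).2 t := fun t ht =>
    (hasFDerivAt_fst (𝕜 := ℝ) (p := α t)).comp_hasDerivAt t (hα t ht)
  have hy : ∀ t ∈ Ioo (S - ε) (S + ε), HasDerivAt (fun t => (α t).2) (F (α t).1) t := fun t ht =>
    (hasFDerivAt_snd (𝕜 := ℝ) (p := α t)).comp_hasDerivAt t (hα t ht)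
  have hSmem : S ∈ Ioo (S - ε) (S + ε) := ⟨by linarith, by linarith⟩
  -- Shrink the time interval to keep the solution negative.
  have hnegev : ∀ᶠ t in 𝓝 S, (α t).1 < 0 :=
    (hx S hSmem).continuousAt.eventually_lt continuousAt_const (by simpa [hα0] using hL)
  obtain ⟨δ, hδ, hδneg⟩ := Metric.eventually_nhds_iff.mp hnegev
  refine ⟨fun s => if s < S then a s else (α s).1, fun s => if s < S then a' s else (α s).2,
    min ε δ, lt_min hε hδ, fun s hs => ⟨if_pos hs, if_pos hs⟩, ?_⟩
  rintro s ⟨hs1, hs2⟩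
  have hsε : s < S + ε := hs2.trans_le (by gcongr; exact min_le_left _ _)
  have hsδ : s < S + δ := hs2.trans_le (by gcongr; exact min_le_right _ _)
  have hsmem : s ∈ Ioo (S - ε) (S + ε) := ⟨by linarith, hsε⟩
  simp only [not_lt.mpr hs1, if_false]
  refine ⟨hδneg (by rw [Real.dist_eq, abs_lt]; constructor <;> linarith), ?_⟩
  rcases hs1.eq_or_lt with rfl | hlt
  · have hFlim : Tendsto (fun s => F (a s)) (𝓝[<] S) (𝓝 (F (α S).1)) := by
      rw [hα0]; exact hF.continuousAt.tendsto.comp hlim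
    exact ⟨hasDerivAt_glue hcS ha (by simpa [hα0] using hlim) (by simpa [hα0] using hlim')
        (hx S hSmem),
      hasDerivAt_glue hcS ha' (by simpa [hα0] using hlim') hFlim (hy S hSmem)⟩
  · constructor
    · refine (hx s hsmem).congr_of_eventuallyEq ?_
      filter_upwards [Ioi_mem_nhds hlt] with y hy
      exact if_neg (not_lt.mpr (le_of_lt hy))
    · refine (hy s hsmem).congr_of_eventuallyEq ?_
      filter_upwards [Ioi_mem_nhds hlt] with y hy
      exact if_neg (not_lt.mpr (le_of_lt hy))

/-- No negative solution exists for all positive times. -/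
lemma not_global {ξ : ℝ} (hξ : ξ < 0) {a a' : ℝ → ℝ}
    (hneg : ∀ s, 0 ≤ s → a s < 0) (hda : ∀ s, 0 ≤ s → HasDerivAt a (a' s) s)
    (hode : ∀ s, 0 ≤ s → HasDerivAt a' (ξ / cbrt (a s)) s) : False := by
  have hmono : MonotoneOn a' (Ici 0) :=
    monotoneOn_of_hasDerivAt (convex_Ici 0) (fun s hs => hode s hs)
      (fun s hs => (force_pos hξ (hneg s hs)).le)
  have hnonpos : ∀ t, 0 ≤ t → a' t ≤ 0 := by
    intro t ht
    by_contra! hpos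
    have hline : MonotoneOn (fun s => a s - a' t * s) (Ici t) :=
      monotoneOn_of_hasDerivAt (convex_Ici t) (f' := fun s => a' s - a' t * 1)
        (fun s hs => (hda s (ht.trans hs)).sub ((hasDerivAt_id s).const_mul _))
        (fun s hs => by
          have := hmono ht (ht.trans hs : (0:ℝ) ≤ s) hs
          linarith)
    -- The time at which the line of slope `a' t` through `(t, a t)` crosses zero.
    set s := t + -a t / a' t with hs
    have hts : t ≤ s := by
      have := div_pos (neg_pos.mpr (hneg t ht)) hpos
      linarith
    have h := hline (self_mem_Ici) hts hts
    have hmul : a' t * s = a' t * t - a t := by rw [hs]; field_simp; ring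
    have := hneg s (ht.trans hts)
    simp only at h
    linarith
  have hlow : ∀ s, 0 ≤ s → a 0 + a' 0 * s ≤ a s := by
    have hline : MonotoneOn (fun s => a s - a' 0 * s) (Ici 0) :=
      monotoneOn_of_hasDerivAt (convex_Ici 0) (f' := fun s => a' s - a' 0 * 1)
        (fun s hs => (hda s hs).sub ((hasDerivAt_id s).const_mul _))
        (fun s hs => by
          have := hmono self_mem_Ici hs hs
          linarith)
    intro s hs
    have := hline self_mem_Ici hs hs
    simp only at this
    linarith
  have h0 := hneg 0 le_rfl
  have h0' := hnonpos 0 le_rfl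
  set K := 1 - a 0 - a' 0 with hK
  have hKpos : 0 < K := by linarith
  set c := -ξ / K with hc
  have hcpos : 0 < c := div_pos (by linarith) hKpos
  have hlog : MonotoneOn (fun s => a' s - c * Real.log (1 + s)) (Ici 0) := by
    refine monotoneOn_of_hasDerivAt (convex_Ici 0)
      (f' := fun s => ξ / cbrt (a s) - c * (1 / (1 + s))) (fun s hs => ?_) (fun s hs => ?_)
    · have hs' : (0:ℝ) ≤ s := hs
      exact (hode s hs).sub ((((hasDerivAt_id s).const_add 1).log (by simp; linarith)).const_mul c)
    · have hs' : (0:ℝ) ≤ s := hs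
      have hden : 1 - a s ≤ K * (1 + s) := by
        have := hlow s hs
        nlinarith
      have h1 := force_lower hξ (hneg s hs)
      have h2 : -ξ / (K * (1 + s)) ≤ -ξ / (1 - a s) :=
        div_le_div_of_nonneg_left (by linarith) (by linarith [hneg s hs]) hden
      have h3 : c * (1 / (1 + s)) = -ξ / (K * (1 + s)) := by
        rw [hc, div_mul_div_comm, mul_one]
      linarith
  -- At `1 + s = exp (1 - a' 0 / c)` the logarithmic lower bound for `a'` equals `c > 0`.
  set s := Real.exp (1 + -a' 0 / c) - 1 with hs
  have hs0 : 0 ≤ s := by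
    have : 0 ≤ 1 + -a' 0 / c := add_nonneg zero_le_one (div_nonneg (by linarith) hcpos.le)
    have := Real.one_le_exp this
    linarith
  have h := hlog self_mem_Ici hs0 hs0
  have hval : c * Real.log (1 + s) = c - a' 0 := by
    rw [hs, add_sub_cancel, Real.log_exp]; field_simp; ring
  have := hnonpos s hs0
  simp only [add_zero, Real.log_one, mul_zero, sub_zero] at h
  linarith

/-- for ξ < 0, the maximal negative solution of the Emden equation
ä = ξ / a^{1/3} (odd cube root), a(0) = a₀ < 0, ȧ(0) = a₁, defined on a maximal
interval [0,S) on which a < 0, has S finite and a(s) → 0 as s → S⁻. -/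
theorem stmt5 (ξ a₀ a₁ : ℝ) (hξ : ξ < 0) (ha₀ : a₀ < 0)
    (a a' : ℝ → ℝ) (S : EReal) (hS : (0 : EReal) < S)
    (h0 : a 0 = a₀) (h1 : a' 0 = a₁)
    (hneg : ∀ s : ℝ, 0 ≤ s → (s : EReal) < S → a s < 0)
    (hda : ∀ s : ℝ, 0 ≤ s → (s : EReal) < S → HasDerivAt a (a' s) s)
    (hode : ∀ s : ℝ, 0 ≤ s → (s : EReal) < S →
      HasDerivAt a' (ξ / cbrt (a s)) s)
    (hmax : ∀ (b b' : ℝ → ℝ) (S' : EReal), S < S' →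
      (∀ s : ℝ, 0 ≤ s → (s : EReal) < S → b s = a s) →
      ¬ (∀ s : ℝ, 0 ≤ s → (s : EReal) < S' →
          b s < 0 ∧ HasDerivAt b (b' s) s ∧
            HasDerivAt b' (ξ / cbrt (b s)) s)) :
    ∃ Sr : ℝ, S = (Sr : EReal) ∧
      Filter.Tendsto a (nhdsWithin Sr (Set.Ico 0 Sr)) (nhds 0) := by
  induction S with
  | bot => exact absurd hS (by simp)
  | top =>
    exact (not_global hξ (fun s hs => hneg s hs (EReal.coe_lt_top s))
      (fun s hs => hda s hs (EReal.coe_lt_top s))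
      (fun s hs => hode s hs (EReal.coe_lt_top s))).elim
  | coe T =>
    simp only [EReal.coe_lt_coe_iff] at hneg hda hode hmax
    have hT : 0 < T := by exact_mod_cast hS
    refine ⟨T, rfl, ?_⟩
    rw [nhdsWithin_Ico_eq_nhdsLT hT]
    have hmono : MonotoneOn a' (Ico 0 T) :=
      monotoneOn_of_hasDerivAt (convex_Ico 0 T) (fun s hs => hode s hs.1 hs.2)
        (fun s hs => (force_pos hξ (hneg s hs.1 hs.2)).le)
    obtain ⟨L, hL⟩ := exists_left_limit (m := a' 0) (B := 0) hT
      (fun s hs => hda s hs.1.le hs.2)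
      (fun s hs => hmono ⟨le_rfl, hT⟩ ⟨hs.1.le, hs.2⟩ hs.1.le)
      (fun s hs => (hneg s hs.1.le hs.2).le)
    have hmem : Ioo 0 T ∈ 𝓝[<] T := Ioo_mem_nhdsLT hT
    have hLle : L ≤ 0 := le_of_tendsto hL <| by
      filter_upwards [hmem] with s hs
      exact (hneg s hs.1.le hs.2).le
    rcases hLle.eq_or_lt with rfl | hLneg
    · exact hL
    exfalso
    have hF : ContDiffAt ℝ 1 (fun y => ξ / cbrt y) L := force_contDiffAt hLneg
    -- The force converges at `T`, hence is bounded by some `M` on an interval `(c, T)`.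
    set M := ξ / cbrt L + 1 with hM
    have hbound : ∀ᶠ s in 𝓝[<] T, ξ / cbrt (a s) < M :=
      (hF.continuousAt.tendsto.comp hL).eventually_lt_const (by simp [hM])
    obtain ⟨c, hcT, hc⟩ := (mem_nhdsLT_iff_exists_Ioo_subset' hT).mp
      (hbound.and hmem)
    have hcT : c < T := hcT
    -- Apply the limit criterion to `-a'`, bounded above by `-a' 0` with derivative at least `-M`.
    obtain ⟨V, hV⟩ := exists_left_limit (f := fun s => -a' s) (m := -M) (B := -a' 0) hcT
      (fun s hs => (hode s (hc hs).2.1.le hs.2).neg)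
      (fun s hs => neg_le_neg (hc hs).1.le)
      (fun s hs => neg_le_neg (hmono ⟨le_rfl, hT⟩ ⟨(hc hs).2.1.le, hs.2⟩ (hc hs).2.1.le))
    have hV' : Tendsto a' (𝓝[<] T) (𝓝 (-V)) := by simpa using hV.neg
    obtain ⟨b, b', ε, hε, hbe, hb⟩ := exists_extension hT hLneg hF
      (fun s hs => hda s hs.1.le hs.2) (fun s hs => hode s hs.1.le hs.2) hL hV'
    refine hmax b b' ((T + ε : ℝ) : EReal) (by exact_mod_cast (by linarith : T < T + ε))
      (fun s _ hs => (hbe s hs).1) (fun s hs0 hs => ?_)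
    have hs : s < T + ε := by exact_mod_cast hs
    rcases lt_or_ge s T with hsT | hsT
    · rw [(hbe s hsT).1, (hbe s hsT).2]
      refine ⟨hneg s hs0 hsT, (hda s hs0 hsT).congr_of_eventuallyEq ?_,
        (hode s hs0 hsT).congr_of_eventuallyEq ?_⟩
      · filter_upwards [Iio_mem_nhds hsT] with y hy using (hbe y hy).1
      · filter_upwards [Iio_mem_nhds hsT] with y hy using (hbe y hy).2
    · exact hb s ⟨hsT, hs⟩
end

section
/- (Theorem 1, case σ = −1, ξ > 0, a₀ < 0, verification.) Let ξ > 0, α > 0, and let a be a negative solution of ä(s) = ξ/(3·a(s)^{1/3}) with a(0) = a₀ < 0, ȧ(0) = a₁, defined on [0,∞) with a(s) < 0 for all s, where a^{1/3} is the real (odd) cube root. Set f(η) = −ξ·√(η²/ξ + (α/ξ)²), ρ(t,x) = f(x/a(3t)^{1/3})/a(3t)^{1/3} and u(t,x) = (ȧ(3t)/a(3t))·x. Then at every point (t,x) with t ≥ 0, (ρ, u) satisfies ∂ρ/∂t + u·∂ρ/∂x + ρ·∂u/∂x = 0 and ∂m/∂t + 2·(∂u/∂x)·m + u·∂m/∂x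 − ρ·∂ρ/∂x = 0, where m = u − α²·∂²u/∂x² = u. -/
lemma cbrt_eq_of_neg {y : ℝ} (hy : y < 0) : cbrt y = -(-y) ^ ((1:ℝ)/3) := by
  simp [cbrt, Real.sign_of_neg hy, abs_of_neg hy]

lemma cbrt_neg_of_neg {y : ℝ} (hy : y < 0) : cbrt y < 0 := by
  rw [cbrt_eq_of_neg hy]
  have := Real.rpow_pos_of_pos (neg_pos.2 hy) ((1:ℝ)/3)
  linarith

lemma cbrt_pow_three_of_neg {y : ℝ} (hy : y < 0) : cbrt y ^ 3 = y := by
  have h : ((-y) ^ ((1:ℝ)/3)) ^ 3 = -y := by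
    rw [← Real.rpow_natCast, ← Real.rpow_mul (by linarith)]
    norm_num
  rw [cbrt_eq_of_neg hy]
  linear_combination -h

lemma hasDerivAt_cbrt_of_neg {y : ℝ} (hy : y < 0) :
    HasDerivAt cbrt (1 / (3 * cbrt y ^ 2)) y := by
  have h1 : HasDerivAt (fun z : ℝ => -(-z) ^ ((1:ℝ)/3))
      (-(-1 * ((1:ℝ)/3) * (-y) ^ ((1:ℝ)/3 - 1))) y :=
    ((hasDerivAt_neg y).rpow_const (Or.inl (by linarith))).neg
  have h2 : cbrt =ᶠ[nhds y] fun z : ℝ => -(-z) ^ ((1:ℝ)/3) := by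
    filter_upwards [Iio_mem_nhds hy] with z hz using cbrt_eq_of_neg hz
  refine (h1.congr_of_eventuallyEq h2).congr_deriv ?_
  have hc := cbrt_neg_of_neg hy
  have h3 := cbrt_pow_three_of_neg hy
  have h4 : (-y) ^ ((1:ℝ)/3) = -cbrt y := by rw [cbrt_eq_of_neg hy, neg_neg]
  rw [Real.rpow_sub_one (by linarith), h4]
  have hc0 := hc.ne
  have hy0 := hy.ne
  field_simp
  linear_combination h3

lemma hasDerivAt_profile {ξ α : ℝ} (hξ : 0 < ξ) (hα : 0 < α) (η : ℝ) :
    HasDerivAt (fun η : ℝ => -ξ * Real.sqrt (η ^ 2 / ξ + (α / ξ) ^ 2))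
      (-η / Real.sqrt (η ^ 2 / ξ + (α / ξ) ^ 2)) η := by
  have hpos : 0 < η ^ 2 / ξ + (α / ξ) ^ 2 := by positivity
  have h := (((((hasDerivAt_id η).pow 2).div_const ξ).add_const ((α / ξ) ^ 2)).sqrt
    hpos.ne').const_mul (-ξ)
  refine h.congr_deriv ?_
  have hS := (Real.sqrt_pos.2 hpos).ne'
  simp only [id, Pi.pow_apply]
  field_simp
  norm_num

/-- Theorem 1, case σ = −1, ξ > 0, a₀ < 0, verification:
with a a negative solution of ä = ξ/(3a^{1/3}) (odd cube root) on [0,∞),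
f(η) = −ξ√(η²/ξ+(α/ξ)²), ρ(t,x) = f(x/a(3t)^{1/3})/a(3t)^{1/3},
u(t,x) = (ȧ(3t)/a(3t))x, m = u − α²u_xx, both equations of the σ = −1
two-component Camassa–Holm system hold at every (t,x) with t ≥ 0. -/
theorem stmt11 (ξ α a₀ a₁ : ℝ) (hξ : 0 < ξ) (hα : 0 < α)
    (a a' : ℝ → ℝ)
    (h0 : a 0 = a₀) (ha₀ : a₀ < 0) (h1 : a' 0 = a₁)
    (hneg : ∀ s : ℝ, 0 ≤ s → a s < 0)
    (hda : ∀ s : ℝ, 0 ≤ s → HasDerivAt a (a' s) s)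
    (hode : ∀ s : ℝ, 0 ≤ s → HasDerivAt a' (ξ / (3 * cbrt (a s))) s) :
    let f : ℝ → ℝ := fun η => -ξ * Real.sqrt (η ^ 2 / ξ + (α / ξ) ^ 2)
    let ρ : ℝ → ℝ → ℝ := fun t x => f (x / cbrt (a (3 * t))) / cbrt (a (3 * t))
    let u : ℝ → ℝ → ℝ := fun t x => a' (3 * t) / a (3 * t) * x
    let m : ℝ → ℝ → ℝ := fun t x => u t x - α ^ 2 * deriv (deriv (fun y => u t y)) x
    ∀ t x : ℝ, 0 ≤ t →
      (deriv (fun τ => ρ τ x) t + u t x * deriv (fun y => ρ t y) x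
          + ρ t x * deriv (fun y => u t y) x = 0) ∧
      (deriv (fun τ => m τ x) t + 2 * deriv (fun y => u t y) x * m t x
          + u t x * deriv (fun y => m t y) x
          - ρ t x * deriv (fun y => ρ t y) x = 0) := by
  intro f ρ u m t x ht
  have ht3 : 0 ≤ 3 * t := by linarith
  have hneg3 := hneg _ ht3
  have hc0 : cbrt (a (3 * t)) ≠ 0 := (cbrt_neg_of_neg hneg3).ne
  have hc3 := cbrt_pow_three_of_neg hneg3
  have hf : ∀ η, HasDerivAt f (-η / Real.sqrt (η ^ 2 / ξ + (α / ξ) ^ 2)) η :=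
    hasDerivAt_profile hξ hα
  have hlin : HasDerivAt (fun τ : ℝ => 3 * τ) 3 t := by
    simpa using (hasDerivAt_id t).const_mul (3:ℝ)
  have hat : HasDerivAt (fun τ => a (3 * τ)) (a' (3 * t) * 3) t :=
    (hda _ ht3).comp t hlin
  have hbt : HasDerivAt (fun τ => a' (3 * τ)) (ξ / (3 * cbrt (a (3 * t))) * 3) t :=
    (hode _ ht3).comp t hlin
  have hct : HasDerivAt (fun τ => cbrt (a (3 * τ)))
      (1 / (3 * cbrt (a (3 * t)) ^ 2) * (a' (3 * t) * 3)) t :=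
    HasDerivAt.comp t (hasDerivAt_cbrt_of_neg hneg3) hat
  have hux : ∀ s y : ℝ, deriv (fun y => u s y) y = a' (3 * s) / a (3 * s) := by
    intro s y
    exact ((hasDerivAt_id y).const_mul (a' (3 * s) / a (3 * s))).deriv.trans (mul_one _)
  have hm : m = u := by
    funext s y
    have h : deriv (fun y => u s y) = fun _ => a' (3 * s) / a (3 * s) := funext (hux s)
    simp only [m, h, deriv_const, mul_zero, sub_zero]
  have hut : deriv (fun τ => u τ x) t = _ :=
    ((hbt.div hat hneg3.ne).mul_const x).deriv
  have hft := HasDerivAt.comp (h₂ := f) (h := fun τ => x / cbrt (a (3 * τ))) t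
    (hf (x / cbrt (a (3 * t)))) ((hasDerivAt_const t x).div hct hc0)
  have hρt : deriv (fun τ => ρ τ x) t = _ := (hft.div hct hc0).deriv
  have hfx := HasDerivAt.comp (h₂ := f) (h := fun y => y / cbrt (a (3 * t))) x
    (hf (x / cbrt (a (3 * t)))) ((hasDerivAt_id x).div_const (cbrt (a (3 * t))))
  have hρx : deriv (fun y => ρ t y) x = _ := (hfx.div_const (cbrt (a (3 * t)))).deriv
  have hS : Real.sqrt ((x / cbrt (a (3 * t))) ^ 2 / ξ + (α / ξ) ^ 2) ≠ 0 :=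
    (Real.sqrt_pos.2 (by positivity)).ne'
  rw [hm, hut, hρt, hρx, hux]
  simp only [ρ, u, f, Function.comp]
  -- Everything is now rational in `c`, the square root `S`, `a'`, `x`, `ξ`, once `a = c ^ 3`.
  generalize Real.sqrt ((x / cbrt (a (3 * t))) ^ 2 / ξ + (α / ξ) ^ 2) = S at hS ⊢
  generalize cbrt (a (3 * t)) = c at hc0 hc3 ⊢
  rw [← hc3]
  constructor
  · field_simp
    ring
  · field_simp
    ring
end
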